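/- Let A ∈ R^{m×n} have rank r_A, let r < r_A, and suppose (X*, Y*) ∈ R^{m×r} × R^{n×r} is a global minimizer of (X, Y) ↦ ‖XYᵀ − A‖_F². Then (X*, Y*) is generalized weakly optimal: (Y*)ᵀ A† X* = I_r, where A† = V Σ⁻¹ Uᵀ is the Moore–Penrose pseudoinverse of A, computed from the compact SVD A = UΣVᵀ. -/

import Mathlib

open Matrix BigOperators

/-- The Frobenius norm of a real matrix. -/
noncomputable def frobNorm {m n : ℕ} (M : Matrix (Fin m) (Fin n) ℝ) : ℝ :=
  Real.sqrt (∑ i, ∑ j, (M i j) ^ 2)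

lemma frob_sq {m n : ℕ} (M : Matrix (Fin m) (Fin n) ℝ) :
    frobNorm M ^ 2 = ∑ i, ∑ j, (M i j) ^ 2 := by
  unfold frobNorm
  exact Real.sq_sqrt (Finset.sum_nonneg fun i _ => Finset.sum_nonneg fun j _ => sq_nonneg _)

lemma frob_tr {m n : ℕ} (M : Matrix (Fin m) (Fin n) ℝ) :
    frobNorm Mᵀ ^ 2 = frobNorm M ^ 2 := by
  rw [frob_sq, frob_sq, Finset.sum_comm]; rfl

lemma key_zero {m n : ℕ} (R : Matrix (Fin m) (Fin n) ℝ) (v : Fin n → ℝ)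
    (h : ∀ z : Fin m → ℝ, frobNorm R ^ 2 ≤ frobNorm (R + vecMulVec z v) ^ 2) :
    R *ᵥ v = 0 := by
  set q := ∑ j, v j ^ 2 with hq
  have hq0 : 0 ≤ q := Finset.sum_nonneg fun j _ => sq_nonneg _
  have row : ∀ (z : Fin m → ℝ) i, ∑ j, ((R + vecMulVec z v) i j) ^ 2
      = ∑ j, R i j ^ 2 + (2 * z i * (R *ᵥ v) i + z i ^ 2 * q) := by
    intro z i
    simp only [mulVec, dotProduct, hq, Finset.mul_sum, ← Finset.sum_add_distrib]
    refine Finset.sum_congr rfl fun j _ => ?_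
    simp only [Matrix.add_apply, vecMulVec_apply]; ring
  have hz := h (fun i => -(1 / (1 + q)) * (R *ᵥ v) i)
  rw [frob_sq, frob_sq] at hz
  simp only [row] at hz
  rw [Finset.sum_add_distrib] at hz
  set c := ∑ i, ((R *ᵥ v) i) ^ 2 with hc
  have e : ∑ i, (2 * (-(1 / (1 + q)) * (R *ᵥ v) i) * (R *ᵥ v) i
      + (-(1 / (1 + q)) * (R *ᵥ v) i) ^ 2 * q) = -((2 + q) / (1 + q) ^ 2) * c := by
    rw [hc, Finset.mul_sum]
    refine Finset.sum_congr rfl fun i _ => ?_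
    field_simp
    ring
  rw [e] at hz
  have hp : 0 < (2 + q) / (1 + q) ^ 2 := by positivity
  have hc0 : c = 0 := by
    have : 0 ≤ c := Finset.sum_nonneg fun j _ => sq_nonneg _
    nlinarith
  ext i
  have := (Finset.sum_eq_zero_iff_of_nonneg (fun i _ => sq_nonneg _)).1 hc0 i (Finset.mem_univ i)
  simpa using this

lemma stationary {m n r : ℕ} (A : Matrix (Fin m) (Fin n) ℝ)
    (Xs : Matrix (Fin m) (Fin r) ℝ) (Ys : Matrix (Fin n) (Fin r) ℝ)
    (hmin : ∀ (X : Matrix (Fin m) (Fin r) ℝ) (Y : Matrix (Fin n) (Fin r) ℝ),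
      frobNorm (Xs * Ysᵀ - A) ^ 2 ≤ frobNorm (X * Yᵀ - A) ^ 2) :
    (Xs * Ysᵀ - A) * Ys = 0 := by
  have h : ∀ w, (Xs * Ysᵀ - A) *ᵥ (Ys *ᵥ w) = 0 := by
    intro w
    apply key_zero
    intro z
    have := hmin (Xs + vecMulVec z w) Ys
    rwa [Matrix.add_mul, vecMulVec_mul, vecMul_transpose, add_sub_right_comm] at this
  ext i k
  have := congrFun (h (Pi.single k 1)) i
  rw [mulVec_mulVec, mulVec_single_one] at this
  simpa using this

lemma full_rank {m n r : ℕ} (A : Matrix (Fin m) (Fin n) ℝ)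
    (Xs : Matrix (Fin m) (Fin r) ℝ) (Ys : Matrix (Fin n) (Fin r) ℝ)
    (hmin : ∀ (X : Matrix (Fin m) (Fin r) ℝ) (Y : Matrix (Fin n) (Fin r) ℝ),
      frobNorm (Xs * Ysᵀ - A) ^ 2 ≤ frobNorm (X * Yᵀ - A) ^ 2)
    (hne : Xs * Ysᵀ ≠ A) : IsUnit (Ysᵀ * Ys) := by
  rw [← Matrix.mulVec_injective_iff_isUnit]
  rw [← Matrix.coe_mulVecLin, ← LinearMap.ker_eq_bot, LinearMap.ker_eq_bot']
  intro w hw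
  rw [Matrix.mulVecLin_apply] at hw
  have hYw : Ys *ᵥ w = 0 := by
    rw [← dotProduct_self_eq_zero, dotProduct_mulVec, ← mulVec_transpose, mulVec_mulVec, hw]
    simp
  by_contra hw0
  have hs : w ⬝ᵥ w ≠ 0 := fun h => hw0 (dotProduct_self_eq_zero.1 h)
  apply hne
  rw [← sub_eq_zero]
  have h : ∀ v, (Xs * Ysᵀ - A) *ᵥ v = 0 := by
    intro v
    apply key_zero
    intro z
    have := hmin (Xs + vecMulVec ((w ⬝ᵥ w)⁻¹ • (z - Xs *ᵥ w)) w) (Ys + vecMulVec v w)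
    convert this using 3
    rw [transpose_add, transpose_vecMulVec, Matrix.add_mul, Matrix.mul_add, Matrix.mul_add,
      vecMulVec_mul, vecMul_transpose, hYw, mul_vecMulVec, vecMulVec_mul_vecMulVec]
    ext i j
    simp [vecMulVec_apply]
    field_simp
    ring
  ext i k
  have := congrFun (h (Pi.single k 1)) i
  rw [mulVec_single_one] at this
  simpa using this

/-- Every global minimizer `(X*, Y*)` of `(X, Y) ↦ ‖XYᵀ − A‖_F²` in the asymmetric
under-parametrized setting (`r < r_A`) is generalized weakly optimal:
`(Y*)ᵀ A† X* = I_r`, where `A† = VΣ⁻¹Uᵀ` is the Moore–Penrose pseudoinverse of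
`A = UΣVᵀ`. -/
theorem stmt_14
    (m n rA r : ℕ) (hr : r < rA)
    (A : Matrix (Fin m) (Fin n) ℝ)
    (U : Matrix (Fin m) (Fin rA) ℝ) (V : Matrix (Fin n) (Fin rA) ℝ) (d : Fin rA → ℝ)
    (hU : Uᵀ * U = 1) (hV : Vᵀ * V = 1)
    (hd : ∀ i, 0 < d i)
    (hdmono : ∀ i j : Fin rA, i ≤ j → d j ≤ d i)
    (hA : A = U * Matrix.diagonal d * Vᵀ)
    (Xs : Matrix (Fin m) (Fin r) ℝ) (Ys : Matrix (Fin n) (Fin r) ℝ)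
    (hmin : ∀ (X : Matrix (Fin m) (Fin r) ℝ) (Y : Matrix (Fin n) (Fin r) ℝ),
      frobNorm (Xs * Ysᵀ - A) ^ 2 ≤ frobNorm (X * Yᵀ - A) ^ 2) :
    Ysᵀ * (V * (Matrix.diagonal d)⁻¹ * Uᵀ) * Xs = 1 := by
  have hne : Xs * Ysᵀ ≠ A := by
    intro h
    have e : (Uᵀ * Xs) * (Ysᵀ * V) = Matrix.diagonal d := by
      calc _ = Uᵀ * (Xs * Ysᵀ) * V := by simp only [Matrix.mul_assoc]
        _ = (Uᵀ * U) * Matrix.diagonal d * (Vᵀ * V) := by rw [h, hA]; simp only [Matrix.mul_assoc]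
        _ = _ := by rw [hU, hV]; simp
    have hrk : (Matrix.diagonal d).rank = rA := by
      have hu : IsUnit (Matrix.diagonal d) := by
        rw [Matrix.isUnit_diagonal, Pi.isUnit_iff]
        exact fun i => (hd i).ne'.isUnit
      simpa using Matrix.rank_of_isUnit _ hu
    have h1 := Matrix.rank_mul_le_left (Uᵀ * Xs) (Ysᵀ * V)
    have h2 := Matrix.rank_le_width (Uᵀ * Xs)
    rw [e, hrk] at h1
    omega
  have hmin' : ∀ (X : Matrix (Fin n) (Fin r) ℝ) (Y : Matrix (Fin m) (Fin r) ℝ),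
      frobNorm (Ys * Xsᵀ - Aᵀ) ^ 2 ≤ frobNorm (X * Yᵀ - Aᵀ) ^ 2 := by
    intro X Y
    have := hmin Y X
    rw [← frob_tr, ← frob_tr (Y * Xᵀ - A)] at this
    simpa using this
  have hY := full_rank A Xs Ys hmin hne
  have hX := full_rank Aᵀ Ys Xs hmin' (by
    intro h; apply hne
    simpa using congrArg Matrix.transpose h)
  have s1 := stationary A Xs Ys hmin
  have s2 := stationary Aᵀ Ys Xs hmin'
  rw [Matrix.sub_mul, sub_eq_zero, Matrix.mul_assoc] at s1 s2
  have hdi : (Matrix.diagonal d)⁻¹ * Matrix.diagonal d = 1 := by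
    apply Matrix.nonsing_inv_mul
    rw [Matrix.det_diagonal]
    exact (Finset.prod_ne_zero_iff.2 fun i _ => (hd i).ne').isUnit
  have hVA : V * Vᵀ * Aᵀ = Aᵀ := by
    rw [hA]
    simp only [transpose_mul, transpose_transpose]
    calc _ = V * (Vᵀ * V) * ((Matrix.diagonal d)ᵀ * Uᵀ) := by simp only [Matrix.mul_assoc]
      _ = _ := by rw [hV]; simp
  have hVY : V * Vᵀ * Ys = Ys := by
    obtain ⟨B, hB⟩ := hX.exists_right_inv
    calc _ = V * Vᵀ * (Ys * (Xsᵀ * Xs)) * B := by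
            rw [Matrix.mul_assoc _ _ B, Matrix.mul_assoc Ys, hB]; simp
      _ = Ys * (Xsᵀ * Xs) * B := by rw [s2, ← Matrix.mul_assoc, hVA]
      _ = Ys := by rw [Matrix.mul_assoc, hB]; simp
  obtain ⟨B, hB⟩ := hY.exists_right_inv
  calc _ = Ysᵀ * (V * (Matrix.diagonal d)⁻¹ * Uᵀ) * (Xs * (Ysᵀ * Ys)) * B := by
          rw [Matrix.mul_assoc _ _ B, Matrix.mul_assoc Xs, hB]; simp
    _ = Ysᵀ * (V * ((Matrix.diagonal d)⁻¹ * ((Uᵀ * U) * Matrix.diagonal d)) * Vᵀ * Ys) * B := by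
          rw [s1, hA]; simp only [Matrix.mul_assoc]
    _ = Ysᵀ * (V * Vᵀ * Ys) * B := by rw [hU, Matrix.one_mul, hdi, Matrix.mul_one]
    _ = 1 := by rw [hVY, hB]
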